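/- (Identity (7.1).) Let q be a complex number with 0 < |q| < 1. Then ∑_{s_1 ≥ s_2 ≥ 0} q^{3 s_1^2 + s_2^2 + s_2} (q;q)_{3 s_1 - s_2} / [(q^3;q^3)_{2 s_1} (q^3;q^3)_{s_1 - s_2} (q^2;q^2)_{s_2}] = (q^{10}, q^4, q^6; q^{10})_∞ / (q^3;q^3)_∞. -/

import Mathlib

/-- The finite q-Pochhammer symbol `(x;q)_n = ∏_{j=0}^{n-1} (1 - x q^j)`. -/
noncomputable def qPoch (x q : ℂ) (n : ℕ) : ℂ := ∏ j ∈ Finset.range n, (1 - x * q ^ j)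

/-- The infinite q-Pochhammer symbol `(x;q)_∞ = ∏_{j=0}^{∞} (1 - x q^j)`. -/
noncomputable def qPochInf (x q : ℂ) : ℂ := ∏' j : ℕ, (1 - x * q ^ j)

/-!
Call `α` and `β` a bilateral Bailey pair if `β_n = ∑_r α_r / ((q;q)_{n-r} (q;q)_{n+r})`, the sum
being over all integers `r`. Reflection of the index shows that `α_r = (-1)^r q^(r²+r)` is paired
with `β_n = q^n / (q²;q²)_n`. The cubic Bailey lemma replaces `α_r` by `q^(r²) α_r`, the base `q` by
`q³`, and `β_n` by the inner sum over `s_2` (up to the factor `(q³;q³)_{2n}`). Summing the new `β_n`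
against `q^(3n²)` is the `n → ∞` case of Bailey's lemma, and turns the double sum into the theta
series `∑_r (-1)^r q^(5r²+r) / (q³;q³)_∞`, which the Jacobi triple product evaluates.
-/

open Filter Finset Topology

theorem qPoch_zero (x q : ℂ) : qPoch x q 0 = 1 := by
  simp [qPoch]

theorem qPoch_succ (x q : ℂ) (n : ℕ) : qPoch x q (n + 1) = qPoch x q n * (1 - x * q ^ n) := by
  simp [qPoch, prod_range_succ]

section FiniteIdentities

variable {q : ℂ}

theorem one_sub_zpow_ne_zero (hq : ¬IsOfFinOrder q) {m : ℤ} (hm : 0 < m) : 1 - q ^ m ≠ 0 := by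
  lift m to ℕ using hm.le
  rw [zpow_natCast]
  exact sub_ne_zero.mpr fun h => hq (isOfFinOrder_iff_pow_eq_one.mpr ⟨m, mod_cast hm, h.symm⟩)

theorem qPoch_self_ne_zero (hq : ¬IsOfFinOrder q) (n : ℕ) : qPoch q q n ≠ 0 := by
  refine prod_ne_zero_iff.mpr fun j _ => ?_
  rw [← pow_succ', ← zpow_natCast]
  exact one_sub_zpow_ne_zero hq (by positivity)

/-- The reciprocal `1 / (q;q)_m` for an integer index `m`, with the usual convention that it
vanishes for `m < 0`; it truncates bilateral sums to their natural range. -/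
noncomputable def qPochInv (q : ℂ) : ℤ → ℂ
  | .ofNat n => (qPoch q q n)⁻¹
  | .negSucc _ => 0

theorem qPochInv_natCast (q : ℂ) (n : ℕ) : qPochInv q n = (qPoch q q n)⁻¹ := rfl

theorem qPochInv_zero (q : ℂ) : qPochInv q 0 = 1 := by
  simpa [qPoch_zero] using qPochInv_natCast q 0

theorem qPochInv_of_neg (q : ℂ) : ∀ {m : ℤ}, m < 0 → qPochInv q m = 0
  | .negSucc _, _ => rfl

theorem qPochInv_sub_one (hq : ¬IsOfFinOrder q) (m : ℤ) :
    qPochInv q (m - 1) = (1 - q ^ m) * qPochInv q m := by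
  rcases lt_trichotomy m 0 with hm | rfl | hm
  · rw [qPochInv_of_neg q hm, qPochInv_of_neg q (by lia), mul_zero]
  · rw [zpow_zero, sub_self, zero_mul, qPochInv_of_neg q (by lia)]
  · have hne := one_sub_zpow_ne_zero hq hm
    obtain ⟨n, rfl⟩ : ∃ n : ℕ, m = (n + 1 : ℕ) := ⟨(m - 1).toNat, by lia⟩
    rw [zpow_natCast] at hne ⊢
    rw [show ((n + 1 : ℕ) : ℤ) - 1 = n by lia, qPochInv_natCast, qPochInv_natCast, qPoch_succ,
      ← pow_succ', mul_inv_rev, mul_inv_cancel_left₀ hne]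

theorem summable_mul_qPochInv_mul_qPochInv (q : ℂ) (α : ℤ → ℂ) (a b : ℤ) :
    Summable fun r : ℤ => α r * qPochInv q (a - r) * qPochInv q (b + r) := by
  refine summable_of_hasFiniteSupport ((Set.finite_Icc (-b) a).subset fun r hr => ?_)
  contrapose! hr
  rw [Set.mem_Icc, not_and_or] at hr
  rcases hr with hr | hr
  · simp [qPochInv_of_neg q (show b + r < 0 by lia)]
  · simp [qPochInv_of_neg q (show a - r < 0 by lia)]

/-- The sum `∑_r α_r / ((q;q)_{a-r} (q;q)_{b+r})` over all integers `r`. For `a = b = n` it is the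
entry `β_n` of the Bailey pair relative to `1` whose other entries are `α_0` and
`α_r + α_{-r}` for `r ≥ 1`. -/
noncomputable def baileySum (q : ℂ) (α : ℤ → ℂ) (a b : ℤ) : ℂ :=
  ∑' r : ℤ, α r * qPochInv q (a - r) * qPochInv q (b + r)

theorem baileySum_congr (q : ℂ) {α β : ℤ → ℂ} (h : ∀ r, α r = β r) (a b : ℤ) :
    baileySum q α a b = baileySum q β a b := by
  rw [funext h]

theorem baileySum_add (q : ℂ) (α β : ℤ → ℂ) (a b : ℤ) :
    baileySum q (fun r => α r + β r) a b = baileySum q α a b + baileySum q β a b := by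
  simp only [baileySum, add_mul]
  exact (summable_mul_qPochInv_mul_qPochInv q α a b).tsum_add
    (summable_mul_qPochInv_mul_qPochInv q β a b)

theorem baileySum_const_mul (q c : ℂ) (α : ℤ → ℂ) (a b : ℤ) :
    baileySum q (fun r => c * α r) a b = c * baileySum q α a b := by
  simp only [baileySum, mul_assoc, tsum_mul_left]

theorem baileySum_comp_neg (q : ℂ) (α : ℤ → ℂ) (a b : ℤ) :
    baileySum q (fun r => α (-r)) a b = baileySum q α b a := by
  rw [baileySum, baileySum, ← tsum_comp_neg]
  refine tsum_congr fun r => ?_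
  rw [neg_neg, sub_neg_eq_add, ← sub_eq_add_neg, mul_right_comm]

theorem baileySum_comp_add_one (q : ℂ) (α : ℤ → ℂ) (a b : ℤ) :
    baileySum q (fun r => α (r + 1)) (a - 1) b = baileySum q α a (b - 1) := by
  rw [baileySum, baileySum, ← (Equiv.addRight (1 : ℤ)).tsum_eq
    fun r => α r * qPochInv q (a - r) * qPochInv q (b - 1 + r)]
  refine tsum_congr fun r => ?_
  rw [Equiv.coe_addRight, show a - (r + 1) = a - 1 - r by ring,
    show b - 1 + (r + 1) = b + r by ring]

theorem baileySum_zero_zero (q : ℂ) (α : ℤ → ℂ) : baileySum q α 0 0 = α 0 := by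
  rw [baileySum, tsum_eq_single 0]
  · simp [qPochInv_zero]
  · intro r hr
    rcases lt_or_gt_of_ne hr with hr | hr
    · simp [qPochInv_of_neg q hr]
    · simp [qPochInv_of_neg q (neg_neg_of_pos hr)]

theorem baileySum_sub_one_left (hq : ¬IsOfFinOrder q) (α : ℤ → ℂ) (a b : ℤ) :
    baileySum q α (a - 1) b = baileySum q (fun r => (1 - q ^ (a - r)) * α r) a b := by
  refine tsum_congr fun r => ?_
  rw [show a - 1 - r = a - r - 1 by ring, qPochInv_sub_one hq]
  ring

theorem baileySum_sub_one_right (hq : ¬IsOfFinOrder q) (α : ℤ → ℂ) (a b : ℤ) :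
    baileySum q α a (b - 1) = baileySum q (fun r => (1 - q ^ (b + r)) * α r) a b := by
  refine tsum_congr fun r => ?_
  rw [show b - 1 + r = b + r - 1 by ring, qPochInv_sub_one hq]
  ring

/-- The analogue of Pascal's rule, from `1 - q^(a+b) = (1 - q^(a-r)) + q^(a-r) (1 - q^(b+r))`. -/
theorem one_sub_zpow_mul_baileySum (hq₀ : q ≠ 0) (hq : ¬IsOfFinOrder q) (α : ℤ → ℂ) (a b : ℤ) :
    (1 - q ^ (a + b)) * baileySum q α a b =
      baileySum q (fun r => α r + q ^ (a - (r + 1)) * α (r + 1)) (a - 1) b := by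
  rw [baileySum_add, baileySum_comp_add_one q (fun r => q ^ (a - r) * α r),
    baileySum_sub_one_left hq, baileySum_sub_one_right hq, ← baileySum_add, ← baileySum_const_mul]
  refine baileySum_congr q (fun r => ?_) a b
  rw [show a + b = a - r + (b + r) by ring, zpow_add₀ hq₀ (a - r)]
  ring

/-! ### The finite triple product and the Durfee rectangle identity -/

theorem one_sub_zpow_mul_baileySum_theta {t z : ℂ} (ht₀ : t ≠ 0) (ht : ¬IsOfFinOrder (t ^ 2))
    (hz : z ≠ 0) (a b : ℤ) :
    (1 - (t ^ 2) ^ (a + b)) * baileySum (t ^ 2) (fun r => z ^ r * t ^ (r ^ 2)) a b =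
      (1 + z * t * (t ^ 2) ^ (a - 1)) *
        baileySum (t ^ 2) (fun r => z ^ r * t ^ (r ^ 2)) (a - 1) b := by
  rw [one_sub_zpow_mul_baileySum (pow_ne_zero 2 ht₀) ht, ← baileySum_const_mul]
  refine baileySum_congr _ (fun r => ?_) _ _
  have hexp : (t ^ 2) ^ (a - (r + 1)) * t ^ ((r + 1) ^ 2) =
      t * (t ^ 2) ^ (a - 1) * t ^ (r ^ 2) := by
    simp only [← zpow_natCast t 2, ← zpow_mul, ← zpow_add₀ ht₀, ← zpow_one_add₀ ht₀]
    congr 1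
    push_cast
    ring
  rw [zpow_add_one₀ hz]
  linear_combination z ^ r * z * hexp

theorem baileySum_theta_mul_qPoch {t z : ℂ} (ht₀ : t ≠ 0) (ht : ¬IsOfFinOrder (t ^ 2))
    (hz : z ≠ 0) (a b : ℕ) :
    baileySum (t ^ 2) (fun r => z ^ r * t ^ (r ^ 2)) a b * qPoch (t ^ 2) (t ^ 2) (a + b) =
      qPoch (-(z * t)) (t ^ 2) a *
        (baileySum (t ^ 2) (fun r => z ^ r * t ^ (r ^ 2)) 0 b * qPoch (t ^ 2) (t ^ 2) b) := by
  induction a with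
  | zero => simp [qPoch_zero]
  | succ a ih =>
    have step := one_sub_zpow_mul_baileySum_theta ht₀ ht hz (a + 1) b
    rw [add_sub_cancel_right, zpow_natCast,
      show (a + 1 + b : ℤ) = (a + b + 1 : ℕ) by push_cast; ring, zpow_natCast] at step
    rw [add_right_comm, qPoch_succ, qPoch_succ, ← pow_succ', Nat.cast_succ]
    linear_combination qPoch (t ^ 2) (t ^ 2) (a + b) * step + (1 + z * t * (t ^ 2) ^ a) * ih

theorem finite_jacobi_triple_product {t z : ℂ} (ht₀ : t ≠ 0) (ht : ¬IsOfFinOrder (t ^ 2))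
    (hz : z ≠ 0) (a b : ℕ) :
    baileySum (t ^ 2) (fun r => z ^ r * t ^ (r ^ 2)) a b =
      qPoch (-(z * t)) (t ^ 2) a * qPoch (-(z⁻¹ * t)) (t ^ 2) b * qPochInv (t ^ 2) (a + b) := by
  have hreflect : baileySum (t ^ 2) (fun r => z ^ r * t ^ (r ^ 2)) 0 b =
      baileySum (t ^ 2) (fun r => z⁻¹ ^ r * t ^ (r ^ 2)) b 0 := by
    simp [← baileySum_comp_neg _ _ (0 : ℤ)]
  have hleft := baileySum_theta_mul_qPoch ht₀ ht hz a b
  have hright := baileySum_theta_mul_qPoch ht₀ ht (inv_ne_zero hz) b 0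
  simp only [Nat.cast_zero, add_zero, baileySum_zero_zero, qPoch_zero, zpow_zero, mul_one,
    zero_pow two_ne_zero] at hright
  rw [hreflect, hright] at hleft
  rw [← Nat.cast_add, qPochInv_natCast, eq_mul_inv_iff_mul_eq₀ (qPoch_self_ne_zero ht _), hleft]

theorem finite_durfee_rectangle (hq₀ : q ≠ 0) (hq : ¬IsOfFinOrder q) (M : ℕ) (c : ℤ) :
    baileySum q (fun k => q ^ (k * (k + c)) * qPochInv q (k + c)) M 0 =
      qPochInv q M * qPochInv q (M + c) := by
  induction M generalizing c with
  | zero => simp [baileySum_zero_zero, qPochInv_zero]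
  | succ M ih =>
    have hstep : ∀ k : ℤ, q ^ (k * (k + c)) * qPochInv q (k + c) +
        q ^ ((M + 1 : ℤ) - (k + 1)) * (q ^ ((k + 1) * (k + 1 + c)) * qPochInv q (k + 1 + c)) =
        q ^ (k * (k + c)) * qPochInv q (k + c) +
          q ^ (M + 1 + c) * (q ^ (k * (k + (c + 1))) * qPochInv q (k + (c + 1))) := fun k => by
      rw [← mul_assoc, ← mul_assoc, ← zpow_add₀ hq₀, ← zpow_add₀ hq₀]
      ring_nf
    have hpascal := one_sub_zpow_mul_baileySum hq₀ hq
      (fun k => q ^ (k * (k + c)) * qPochInv q (k + c)) (M + 1) 0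
    simp only [hstep, baileySum_add, baileySum_const_mul, add_sub_cancel_right, ih, add_zero]
      at hpascal
    have hM := qPochInv_sub_one hq (M + 1)
    have hMc := qPochInv_sub_one hq (M + 1 + c)
    rw [add_sub_cancel_right] at hM
    rw [show (M + 1 + c - 1 : ℤ) = M + c by ring] at hMc
    rw [show (M + (c + 1) : ℤ) = M + 1 + c by ring, hM, hMc] at hpascal
    push_cast
    refine mul_left_cancel₀ (one_sub_zpow_ne_zero hq (m := M + 1) (by positivity)) ?_
    linear_combination hpascal

/-! ### A bilateral Bailey pair -/

theorem baileySum_neg_inv_eq_zero (hq₀ : q ≠ 0) (n : ℤ) :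
    baileySum q (fun r => (-q⁻¹) ^ r * q ^ (r ^ 2)) n (n - 1) = 0 := by
  have hanti : baileySum q (fun r => (-q⁻¹) ^ r * q ^ (r ^ 2)) n (n - 1) =
      -baileySum q (fun r => (-q⁻¹) ^ r * q ^ (r ^ 2)) n (n - 1) := by
    conv_lhs => rw [baileySum, ← (Equiv.subLeft (1 : ℤ)).tsum_eq]
    rw [baileySum, ← tsum_neg]
    refine tsum_congr fun r => ?_
    have hsign : (-q⁻¹) ^ (1 - r) * q ^ ((1 - r) ^ 2) = -((-q⁻¹) ^ r * q ^ (r ^ 2)) := by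
      rw [← inv_neg, inv_zpow', inv_zpow', ← neg_one_mul q, mul_zpow, mul_zpow, mul_assoc,
        mul_assoc, ← zpow_add₀ hq₀, ← zpow_add₀ hq₀, neg_sub, zpow_sub_one₀ (by norm_num), zpow_neg,
        ← inv_zpow]
      norm_num
      exact Or.inl (by ring_nf)
    rw [Equiv.subLeft_apply, hsign, show n - (1 - r) = n - 1 + r by ring,
      show n - 1 + (1 - r) = n - r by ring]
    ring
  exact self_eq_neg.mp hanti

theorem baileySum_neg_self (hq₀ : q ≠ 0) (hq : ¬IsOfFinOrder q) (n : ℤ) :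
    baileySum q (fun r => (-q) ^ r * q ^ (r ^ 2)) n n =
      q ^ n * baileySum q (fun r => (-1) ^ r * q ^ (r ^ 2)) n n := by
  have hvanish := baileySum_neg_inv_eq_zero hq₀ n
  have hreflect : baileySum q (fun r => (-q) ^ r * q ^ (r ^ 2)) n n =
      baileySum q (fun r => (-q⁻¹) ^ r * q ^ (r ^ 2)) n n := by
    rw [← baileySum_comp_neg q fun r => (-q⁻¹) ^ r * q ^ (r ^ 2)]
    simp [← inv_neg]
  have hsplit : ∀ r : ℤ, (1 - q ^ (n + r)) * ((-q⁻¹) ^ r * q ^ (r ^ 2)) =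
      (-q⁻¹) ^ r * q ^ (r ^ 2) + -q ^ n * ((-1) ^ r * q ^ (r ^ 2)) := fun r => by
    rw [zpow_add₀ hq₀, ← neg_one_mul q⁻¹, mul_zpow, inv_zpow]
    field_simp
    ring
  rw [baileySum_sub_one_right hq, baileySum_congr q hsplit, baileySum_add, baileySum_const_mul]
    at hvanish
  linear_combination hreflect + hvanish

theorem one_sub_zpow_mul_baileySum_neg_one (hq₀ : q ≠ 0) (hq : ¬IsOfFinOrder q) (n : ℤ) :
    (1 - q ^ (2 * n)) * baileySum q (fun r => (-1) ^ r * q ^ (r ^ 2)) n n =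
      baileySum q (fun r => (-1) ^ r * q ^ (r ^ 2)) (n - 1) (n - 1) := by
  have hsplit : ∀ r : ℤ, (1 - q ^ (n + r)) * ((1 - q ^ (n - r)) * ((-1) ^ r * q ^ (r ^ 2))) =
      (1 + q ^ (2 * n)) * ((-1) ^ r * q ^ (r ^ 2)) +
        -q ^ n * ((-q) ^ r * q ^ (r ^ 2) + (-q) ^ (-r) * q ^ ((-r) ^ 2)) := fun r => by
    rw [← neg_one_mul q, mul_zpow, mul_zpow, two_mul, zpow_add₀ hq₀, zpow_add₀ hq₀, zpow_sub₀ hq₀,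
      zpow_neg, zpow_neg, neg_sq, ← inv_zpow (-1 : ℂ), inv_neg, inv_one]
    field_simp
    ring
  rw [baileySum_sub_one_left hq, baileySum_sub_one_right hq, baileySum_congr q hsplit,
    baileySum_add, baileySum_const_mul, baileySum_const_mul, baileySum_add,
    baileySum_comp_neg q fun r => (-q) ^ r * q ^ (r ^ 2), baileySum_neg_self hq₀ hq, two_mul,
    zpow_add₀ hq₀]
  ring

theorem baileySum_neg_one_eq (hq₀ : q ≠ 0) (hq : ¬IsOfFinOrder q) (n : ℕ) :
    baileySum q (fun r => (-1) ^ r * q ^ (r ^ 2)) n n = qPochInv (q ^ 2) n := by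
  have hq2 : ¬IsOfFinOrder (q ^ 2) := by simpa using hq
  induction n with
  | zero => simp [baileySum_zero_zero, qPochInv_zero]
  | succ n ih =>
    have hstep := one_sub_zpow_mul_baileySum_neg_one hq₀ hq (n + 1)
    have hinv := qPochInv_sub_one hq2 (n + 1)
    rw [add_sub_cancel_right] at hstep hinv
    rw [ih, hinv, ← zpow_natCast q 2, ← zpow_mul] at hstep
    exact mul_left_cancel₀ (one_sub_zpow_ne_zero hq (by positivity)) hstep

/-! ### The cubic Bailey lemma -/

/-- The weight `q^(k²) (q;q)_{3n-k} / (q³;q³)_{n-k}` with which `β_k` enters the cubic Bailey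
lemma. It vanishes for `k > n`, so the truncated subtraction `3 * n - k` is harmless. -/
noncomputable def cubicWeight (q : ℂ) (n k : ℕ) : ℂ :=
  q ^ (k ^ 2) * qPoch q q (3 * n - k) * qPochInv (q ^ 3) (n - k)

theorem cubicWeight_of_lt (q : ℂ) {n k : ℕ} (h : n < k) : cubicWeight q n k = 0 := by
  rw [cubicWeight, qPochInv_of_neg _ (by lia), mul_zero]

theorem one_sub_zpow_mul_cubicWeight_succ (hq : ¬IsOfFinOrder q) {n k : ℕ} (hk : k ≤ n) :
    (1 - q ^ (3 * n - k : ℤ)) * cubicWeight q n (k + 1) =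
      q ^ (2 * k + 1 : ℤ) * (1 - q ^ (3 * (n - k) : ℤ)) * cubicWeight q n k := by
  have hq3 : ¬IsOfFinOrder (q ^ 3) := by simpa using hq
  rcases hk.eq_or_lt with rfl | hk
  · simp [cubicWeight_of_lt]
  · have hinv := qPochInv_sub_one hq3 (n - k)
    obtain ⟨m, hm⟩ : ∃ m, 3 * n - k = m + 1 := ⟨3 * n - k - 1, by lia⟩
    rw [cubicWeight, cubicWeight, show 3 * n - (k + 1) = m by lia, hm, qPoch_succ, ← pow_succ',
      show (3 * n - k : ℤ) = (m + 1 : ℕ) by lia, show ((n : ℤ) - (k + 1 : ℕ)) = n - k - 1 by lia,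
      hinv, zpow_natCast, zpow_mul, show (2 * k + 1 : ℤ) = (2 * k + 1 : ℕ) by lia, zpow_natCast]
    norm_cast
    ring

/-- A Wilf–Zeilberger pair: the right-hand side is a difference in `k`. -/
theorem cubic_wz (hq₀ : q ≠ 0) (hq : ¬IsOfFinOrder q) {n k : ℕ} (hk : k ≤ n) (r : ℤ) :
    q ^ (2 * r + 1) * (1 - q ^ (3 * (n - r))) *
          (cubicWeight q n k * qPochInv q (k - r) * qPochInv q (k + r)) -
        (1 - q ^ (3 * (n + r + 1))) *
          (cubicWeight q n k * qPochInv q (k - (r + 1)) * qPochInv q (k + (r + 1))) =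
      (1 - q ^ (2 * r + 1)) * ((1 - q ^ (3 * n + 1 - (k + 1 : ℕ) : ℤ)) * cubicWeight q n (k + 1) *
          qPochInv q ((k + 1 : ℕ) - (r + 1)) * qPochInv q ((k + 1 : ℕ) + r)) -
        (1 - q ^ (2 * r + 1)) * ((1 - q ^ (3 * n + 1 - k : ℤ)) * cubicWeight q n k *
          qPochInv q (k - (r + 1)) * qPochInv q (k + r)) := by
  have hminus := qPochInv_sub_one hq (k - r)
  have hplus := qPochInv_sub_one hq (k + r + 1)
  rw [add_sub_cancel_right] at hplus
  rw [show (3 * n + 1 - (k + 1 : ℕ) : ℤ) = 3 * n - k by lia,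
    one_sub_zpow_mul_cubicWeight_succ hq hk, show ((k + 1 : ℕ) - (r + 1) : ℤ) = k - r by lia,
    show ((k + 1 : ℕ) + r : ℤ) = k + r + 1 by lia,
    show (k - (r + 1) : ℤ) = k - r - 1 by ring, ← add_assoc (k : ℤ) r 1, hminus, hplus]
  simp only [mul_sub, mul_comm (3 : ℤ), mul_comm (2 : ℤ), zpow_add₀ hq₀, zpow_sub₀ hq₀,
    zpow_mul _ _ (2 : ℤ), zpow_mul _ _ (3 : ℤ), zpow_one]
  norm_cast
  field_simp
  ring

theorem sum_cubicWeight_recurrence (hq₀ : q ≠ 0) (hq : ¬IsOfFinOrder q) (n : ℕ) (r : ℤ) :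
    q ^ (2 * r + 1) * (1 - q ^ (3 * (n - r))) *
        ∑ k ∈ range (n + 1), cubicWeight q n k * qPochInv q (k - r) * qPochInv q (k + r) =
      (1 - q ^ (3 * (n + r + 1))) * ∑ k ∈ range (n + 1),
        cubicWeight q n k * qPochInv q (k - (r + 1)) * qPochInv q (k + (r + 1)) := by
  have hstart : qPochInv q ((0 : ℕ) - (r + 1)) * qPochInv q ((0 : ℕ) + r) = 0 := by
    rcases lt_or_ge r 0 with hr | hr
    · rw [qPochInv_of_neg q (m := (0 : ℕ) + r) (by lia), mul_zero]
    · rw [qPochInv_of_neg q (by lia), zero_mul]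
  rw [← sub_eq_zero, mul_sum, mul_sum, ← sum_sub_distrib,
    sum_congr rfl fun k hk => cubic_wz hq₀ hq (mem_range_succ_iff.mp hk) r,
    sum_range_sub fun k : ℕ => (1 - q ^ (2 * r + 1)) * ((1 - q ^ (3 * n + 1 - k : ℤ)) *
      cubicWeight q n k * qPochInv q (k - (r + 1)) * qPochInv q (k + r)),
    cubicWeight_of_lt q n.lt_succ_self]
  linear_combination
    -(1 - q ^ (2 * r + 1)) * (1 - q ^ (3 * n + 1 - (0 : ℕ) : ℤ)) * cubicWeight q n 0 * hstart

theorem sum_cubicWeight_neg_self (hq : ¬IsOfFinOrder q) (n : ℕ) :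
    ∑ k ∈ range (n + 1), cubicWeight q n k * qPochInv q (k - -n) * qPochInv q (k + -n) =
      q ^ ((-n : ℤ) ^ 2) := by
  rw [sum_eq_single_of_mem n (self_mem_range_succ n)]
  · rw [sub_neg_eq_add, add_neg_cancel, qPochInv_zero, mul_one, cubicWeight, sub_self,
      qPochInv_zero, mul_one, ← Nat.cast_add, qPochInv_natCast, ← two_mul,
      show 3 * n - n = 2 * n by lia, mul_inv_cancel_right₀ (qPoch_self_ne_zero hq _), neg_sq]
    norm_cast
  · intro k hk hkn
    have := mem_range_succ_iff.mp hk
    rw [qPochInv_of_neg q (m := k + -n) (by lia), mul_zero]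

theorem sum_cubicWeight (hq₀ : q ≠ 0) (hq : ¬IsOfFinOrder q) (n : ℕ) (r : ℤ) :
    ∑ k ∈ range (n + 1), cubicWeight q n k * qPochInv q (k - r) * qPochInv q (k + r) =
      qPoch (q ^ 3) (q ^ 3) (2 * n) *
        (q ^ (r ^ 2) * qPochInv (q ^ 3) (n - r) * qPochInv (q ^ 3) (n + r)) := by
  have hq3 : ¬IsOfFinOrder (q ^ 3) := by simpa using hq
  have hcube (m : ℤ) : (q ^ 3) ^ m = q ^ (3 * m) := (zpow_mul q 3 m).symm
  rcases lt_or_ge r (-n) with hr | hr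
  · rw [qPochInv_of_neg (q ^ 3) (m := n + r) (by lia), mul_zero, mul_zero]
    refine sum_eq_zero fun k hk => ?_
    have := mem_range_succ_iff.mp hk
    rw [qPochInv_of_neg q (m := k + r) (by lia), mul_zero]
  induction r, hr using Int.leInduction with
  | base =>
    rw [sum_cubicWeight_neg_self hq, add_neg_cancel, qPochInv_zero, mul_one, sub_neg_eq_add,
      ← Nat.cast_add, ← two_mul, qPochInv_natCast, mul_left_comm,
      mul_inv_cancel₀ (qPoch_self_ne_zero hq3 _), mul_one]
  | succ r hr ih =>
    have hrec := sum_cubicWeight_recurrence hq₀ hq n r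
    have hminus := qPochInv_sub_one hq3 (n - r)
    have hplus := qPochInv_sub_one hq3 (n + r + 1)
    rw [add_sub_cancel_right, hcube] at hplus
    rw [hcube] at hminus
    refine mul_left_cancel₀ (one_sub_zpow_ne_zero hq (m := 3 * (n + r + 1)) (by lia)) ?_
    rw [← hrec, ih, hplus, show (n - (r + 1) : ℤ) = n - r - 1 by ring, hminus,
      show (r + 1) ^ 2 = r ^ 2 + (2 * r + 1) by ring, zpow_add₀ hq₀ (r ^ 2), ← add_assoc]
    ring

theorem cubic_bailey_lemma (hq₀ : q ≠ 0) (hq : ¬IsOfFinOrder q) (α : ℤ → ℂ) (n : ℕ) :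
    baileySum (q ^ 3) (fun r => q ^ (r ^ 2) * α r) n n =
      (qPoch (q ^ 3) (q ^ 3) (2 * n))⁻¹ *
        ∑ k ∈ range (n + 1), cubicWeight q n k * baileySum q α k k := by
  have hq3 : ¬IsOfFinOrder (q ^ 3) := by simpa using hq
  rw [eq_inv_mul_iff_mul_eq₀ (qPoch_self_ne_zero hq3 _)]
  simp only [baileySum, ← tsum_mul_left]
  rw [← Summable.tsum_finsetSum
    (f := fun (k : ℕ) r => cubicWeight q n k * (α r * qPochInv q (k - r) * qPochInv q (k + r)))
    fun k _ => (summable_mul_qPochInv_mul_qPochInv q α k k).mul_left _]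
  refine tsum_congr fun r => ?_
  calc _ = α r * (qPoch (q ^ 3) (q ^ 3) (2 * n) *
        (q ^ (r ^ 2) * qPochInv (q ^ 3) (n - r) * qPochInv (q ^ 3) (n + r))) := by ring
    _ = _ := by
      rw [← sum_cubicWeight hq₀ hq, mul_sum]
      exact sum_congr rfl fun k _ => by ring

end FiniteIdentities

section Limits

variable {q : ℂ}

theorem not_isOfFinOrder_of_norm_lt_one (hq : ‖q‖ < 1) : ¬IsOfFinOrder q :=
  fun h => hq.ne h.norm_eq_one

theorem norm_pow_lt_one (hq : ‖q‖ < 1) {n : ℕ} (hn : n ≠ 0) : ‖q ^ n‖ < 1 := by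
  rw [norm_pow]
  exact pow_lt_one₀ (norm_nonneg q) hq hn

theorem summable_norm_neg_mul_pow (x : ℂ) (hq : ‖q‖ < 1) :
    Summable fun j : ℕ => ‖-(x * q ^ j)‖ := by
  simpa only [norm_neg, norm_mul, norm_pow] using
    (summable_geometric_of_lt_one (norm_nonneg q) hq).mul_left ‖x‖

theorem tendsto_qPoch (x : ℂ) (hq : ‖q‖ < 1) :
    Tendsto (qPoch x q) atTop (𝓝 (qPochInf x q)) := by
  have hmul := multipliable_one_add_of_summable (summable_norm_neg_mul_pow x hq)
  simp only [← sub_eq_add_neg] at hmul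
  exact hmul.tendsto_prod_tprod_nat

theorem qPochInf_self_ne_zero (hq : ‖q‖ < 1) : qPochInf q q ≠ 0 := by
  have hfactor (j : ℕ) : 1 + -(q * q ^ j) ≠ 0 := by
    rw [← sub_eq_add_neg, ← pow_succ', ← zpow_natCast]
    exact one_sub_zpow_ne_zero (not_isOfFinOrder_of_norm_lt_one hq) (by positivity)
  simpa only [qPochInf, sub_eq_add_neg] using
    tprod_one_add_ne_zero_of_summable hfactor (summable_norm_neg_mul_pow q hq)

theorem tendsto_qPochInv (hq : ‖q‖ < 1) :
    Tendsto (qPochInv q) atTop (𝓝 (qPochInf q q)⁻¹) := by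
  have hnat : Tendsto (fun n : ℕ => qPochInv q n) atTop (𝓝 (qPochInf q q)⁻¹) :=
    (tendsto_qPoch q hq).inv₀ (qPochInf_self_ne_zero hq)
  rwa [← Nat.map_cast_int_atTop, tendsto_map'_iff]

theorem exists_norm_qPoch_le (x : ℂ) (hq : ‖q‖ < 1) : ∃ C, ∀ n, ‖qPoch x q n‖ ≤ C := by
  obtain ⟨C, hC⟩ := (Metric.isBounded_range_of_tendsto _ (tendsto_qPoch x hq)).exists_norm_le
  exact ⟨C, fun n => hC _ (Set.mem_range_self n)⟩

theorem exists_norm_qPochInv_le (hq : ‖q‖ < 1) : ∃ C, ∀ m, ‖qPochInv q m‖ ≤ C := by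
  have hnat := (tendsto_qPochInv hq).comp tendsto_natCast_atTop_atTop
  obtain ⟨C, hC⟩ := (Metric.isBounded_range_of_tendsto _ hnat).exists_norm_le
  refine ⟨C, fun m => ?_⟩
  rcases lt_or_ge m 0 with hm | hm
  · rw [qPochInv_of_neg q hm, norm_zero]
    exact (norm_nonneg _).trans (hC _ (Set.mem_range_self 0))
  · lift m to ℕ using hm
    exact hC _ (Set.mem_range_self m)

theorem summable_norm_pow_sq (hq : ‖q‖ < 1) : Summable fun n : ℕ => ‖q ^ (n ^ 2)‖ := by
  refine (summable_geometric_of_lt_one (norm_nonneg q) hq).of_nonneg_of_le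
    (fun _ => norm_nonneg _) fun n => ?_
  rw [norm_pow]
  exact pow_le_pow_of_le_one (norm_nonneg q) hq.le (Nat.le_self_pow two_ne_zero n)

theorem summable_theta {t z : ℂ} (ht₀ : t ≠ 0) (ht : ‖t‖ < 1) (hz : z ≠ 0) :
    Summable fun r : ℤ => z ^ r * t ^ (r ^ 2) := by
  have him : 0 < (Function.Periodic.invQParam 2 t).im := by
    rw [Function.Periodic.im_invQParam]
    exact mul_pos_of_neg_of_neg (div_neg_of_neg_of_pos (by norm_num) Real.two_pi_pos)
      (Real.log_neg (norm_pos_iff.mpr ht₀) ht)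
  refine ((summable_jacobiTheta₂_term_iff (Function.Periodic.invQParam 1 z) _).mpr him).congr
    fun r => ?_
  conv_rhs =>
    rw [← Function.Periodic.qParam_right_inv one_ne_zero hz,
      ← Function.Periodic.qParam_right_inv two_ne_zero ht₀]
  rw [jacobiTheta₂_term, Function.Periodic.qParam, Function.Periodic.qParam, ← Complex.exp_int_mul,
    ← Complex.exp_int_mul, ← Complex.exp_add]
  congr 1
  push_cast
  ring

/-! ### Letting the indices of a Bailey sum tend to infinity -/

theorem tendsto_baileySum_left (hq : ‖q‖ < 1) {α : ℤ → ℂ} (hα : Summable α) (b : ℤ) :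
    Tendsto (fun a => baileySum q α a b) atTop
      (𝓝 ((∑' r, α r * qPochInv q (b + r)) * (qPochInf q q)⁻¹)) := by
  obtain ⟨C, hC⟩ := exists_norm_qPochInv_le hq
  rw [← tsum_mul_right]
  simp only [mul_right_comm _ (qPochInv q _) (qPochInf q q)⁻¹]
  refine tendsto_tsum_of_dominated_convergence ((hα.norm.mul_right C).mul_right C) (fun r => ?_)
    (Eventually.of_forall fun a r => ?_)
  · have hsub := (tendsto_qPochInv hq).comp (tendsto_atTop_add_const_right atTop (-r) tendsto_id)
    exact (hsub.const_mul (α r)).mul_const _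
  · have hC₀ := (norm_nonneg _).trans (hC 0)
    rw [norm_mul, norm_mul]
    gcongr <;> exact hC _

theorem tendsto_baileySum (hq : ‖q‖ < 1) {α : ℤ → ℂ} (hα : Summable α) :
    Tendsto (fun n => baileySum q α n n) atTop
      (𝓝 ((∑' r, α r) * (qPochInf q q)⁻¹ * (qPochInf q q)⁻¹)) := by
  obtain ⟨C, hC⟩ := exists_norm_qPochInv_le hq
  rw [← tsum_mul_right, ← tsum_mul_right]
  refine tendsto_tsum_of_dominated_convergence ((hα.norm.mul_right C).mul_right C) (fun r => ?_)
    (Eventually.of_forall fun n r => ?_)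
  · have hsub := (tendsto_qPochInv hq).comp (tendsto_atTop_add_const_right atTop (-r) tendsto_id)
    have hadd := (tendsto_qPochInv hq).comp (tendsto_atTop_add_const_right atTop r tendsto_id)
    exact (hsub.const_mul (α r)).mul hadd
  · have hC₀ := (norm_nonneg _).trans (hC 0)
    rw [norm_mul, norm_mul]
    gcongr <;> exact hC _

theorem jacobi_triple_product {t z : ℂ} (ht₀ : t ≠ 0) (ht : ‖t‖ < 1) (hz : z ≠ 0) :
    ∑' r : ℤ, z ^ r * t ^ (r ^ 2) =
      qPochInf (t ^ 2) (t ^ 2) * qPochInf (-(z * t)) (t ^ 2) * qPochInf (-(z⁻¹ * t)) (t ^ 2) := by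
  have ht2 := norm_pow_lt_one ht two_ne_zero
  have hcast := tendsto_natCast_atTop_atTop (R := ℤ)
  have hleft := (tendsto_baileySum ht2 (summable_theta ht₀ ht hz)).comp hcast
  have hright := ((tendsto_qPoch (-(z * t)) ht2).mul (tendsto_qPoch (-(z⁻¹ * t)) ht2)).mul
    ((tendsto_qPochInv ht2).comp (hcast.atTop_add_atTop hcast))
  have hfinite (n : ℕ) := finite_jacobi_triple_product ht₀
    (not_isOfFinOrder_of_norm_lt_one ht2) hz n n
  have hlim := tendsto_nhds_unique (hleft.congr hfinite) hright
  have hne := qPochInf_self_ne_zero ht2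
  rw [mul_left_inj' (inv_ne_zero hne), ← div_eq_mul_inv, div_eq_iff hne] at hlim
  rw [hlim]
  ring

theorem tsum_durfee_rectangle (hq₀ : q ≠ 0) (hq : ‖q‖ < 1) (c : ℤ) :
    ∑' k : ℤ, q ^ (k * (k + c)) * qPochInv q (k + c) * qPochInv q k = (qPochInf q q)⁻¹ := by
  have hsummable : Summable fun k : ℤ => q ^ (k * (k + c)) * qPochInv q (k + c) := by
    obtain ⟨C, hC⟩ := exists_norm_qPochInv_le hq
    refine ((summable_theta hq₀ hq (zpow_ne_zero c hq₀)).norm.mul_right C).of_norm_bounded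
      fun k => ?_
    rw [← zpow_mul, ← zpow_add₀ hq₀, norm_mul, show c * k + k ^ 2 = k * (k + c) by ring]
    gcongr
    exact hC _
  have hleft := (tendsto_baileySum_left hq hsummable 0).comp tendsto_natCast_atTop_atTop
  have hright := ((tendsto_qPochInv hq).mul ((tendsto_qPochInv hq).comp
    (tendsto_atTop_add_const_right atTop c tendsto_id))).comp tendsto_natCast_atTop_atTop
  have hlim := tendsto_nhds_unique
    (hleft.congr fun M => finite_durfee_rectangle hq₀ (not_isOfFinOrder_of_norm_lt_one hq) M c)
    hright
  simpa only [zero_add] using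
    mul_right_cancel₀ (inv_ne_zero (qPochInf_self_ne_zero hq)) hlim

theorem tsum_pow_sq_mul_qPochInv (hq₀ : q ≠ 0) (hq : ‖q‖ < 1) (r : ℤ) :
    ∑' n : ℕ, q ^ (n ^ 2) * (qPochInv q (n - r) * qPochInv q (n + r)) =
      q ^ (r ^ 2) * (qPochInf q q)⁻¹ := by
  have hsupport : (Function.support fun n : ℤ =>
      q ^ (n ^ 2) * (qPochInv q (n - r) * qPochInv q (n + r))) ⊆ Set.range ((↑) : ℕ → ℤ) := by
    intro n hn
    refine Set.mem_range.mpr (CanLift.prf n (le_of_not_gt fun hneg => hn ?_))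
    rcases lt_or_ge n r with hr | hr
    · simp [qPochInv_of_neg q (show n - r < 0 by lia)]
    · simp [qPochInv_of_neg q (show n + r < 0 by lia)]
  calc ∑' n : ℕ, q ^ (n ^ 2) * (qPochInv q (n - r) * qPochInv q (n + r))
      = ∑' n : ℤ, q ^ (n ^ 2) * (qPochInv q (n - r) * qPochInv q (n + r)) := by
        rw [← Nat.cast_injective.tsum_eq hsupport]
        norm_cast
    _ = ∑' k : ℤ, q ^ (r ^ 2) *
          (q ^ (k * (k + 2 * r)) * qPochInv q (k + 2 * r) * qPochInv q k) := by
        rw [← (Equiv.addRight r).tsum_eq]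
        refine tsum_congr fun k => ?_
        rw [Equiv.coe_addRight, show (k + r) ^ 2 = r ^ 2 + k * (k + 2 * r) by ring, zpow_add₀ hq₀,
          add_sub_cancel_right, add_assoc k, ← two_mul]
        ring
    _ = q ^ (r ^ 2) * (qPochInf q q)⁻¹ := by rw [tsum_mul_left, tsum_durfee_rectangle hq₀ hq]

theorem limiting_bailey_lemma (hq₀ : q ≠ 0) (hq : ‖q‖ < 1) {α : ℤ → ℂ} (hα : Summable α) :
    ∑' n : ℕ, q ^ (n ^ 2) * baileySum q α n n =
      (∑' r : ℤ, q ^ (r ^ 2) * α r) * (qPochInf q q)⁻¹ := by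
  have hsummable : Summable (Function.uncurry fun (n : ℕ) (r : ℤ) =>
      q ^ (n ^ 2) * (α r * qPochInv q (n - r) * qPochInv q (n + r))) := by
    obtain ⟨C, hC⟩ := exists_norm_qPochInv_le hq
    have hC₀ := (norm_nonneg _).trans (hC 0)
    refine ((summable_norm_pow_sq hq).mul_of_nonneg ((hα.norm.mul_right C).mul_right C)
      (fun _ => norm_nonneg _) fun _ => by positivity).of_norm_bounded fun p => ?_
    rw [Function.uncurry_def, norm_mul, norm_mul, norm_mul]
    gcongr <;> exact hC _
  calc ∑' n : ℕ, q ^ (n ^ 2) * baileySum q α n n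
      = ∑' (n : ℕ) (r : ℤ), q ^ (n ^ 2) * (α r * qPochInv q (n - r) * qPochInv q (n + r)) := by
        simp only [baileySum, tsum_mul_left]
    _ = ∑' (r : ℤ) (n : ℕ), α r * (q ^ (n ^ 2) * (qPochInv q (n - r) * qPochInv q (n + r))) := by
        rw [← hsummable.tsum_comm]
        exact tsum_congr fun r => tsum_congr fun n => by ring
    _ = ∑' r : ℤ, q ^ (r ^ 2) * α r * (qPochInf q q)⁻¹ := by
        refine tsum_congr fun r => ?_
        rw [tsum_mul_left, tsum_pow_sq_mul_qPochInv hq₀ hq]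
        ring
    _ = _ := tsum_mul_right

/-! ### The double sum -/

theorem exists_norm_cubicWeight_le (hq : ‖q‖ < 1) : ∃ C, ∀ n k, ‖cubicWeight q n k‖ ≤ C := by
  obtain ⟨A, hA⟩ := exists_norm_qPoch_le q hq
  obtain ⟨B, hB⟩ := exists_norm_qPochInv_le (norm_pow_lt_one hq three_ne_zero)
  have hA₀ := (norm_nonneg _).trans (hA 0)
  refine ⟨1 * A * B, fun n k => ?_⟩
  rw [cubicWeight, norm_mul, norm_mul, norm_pow]
  gcongr
  · exact pow_le_one₀ (norm_nonneg q) hq.le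
  · exact hA _
  · exact hB _

theorem summable_cubicWeight_mul (hq : ‖q‖ < 1) {β : ℕ → ℂ} (hβ : Summable β) :
    Summable fun p : ℕ × ℕ => (q ^ 3) ^ (p.1 ^ 2) * (qPoch (q ^ 3) (q ^ 3) (2 * p.1))⁻¹ *
      (cubicWeight q p.1 p.2 * β p.2) := by
  have hq3 := norm_pow_lt_one hq three_ne_zero
  obtain ⟨A, hA⟩ := exists_norm_qPochInv_le hq3
  obtain ⟨B, hB⟩ := exists_norm_cubicWeight_le hq
  have hA₀ := (norm_nonneg _).trans (hA 0)
  have hB₀ := (norm_nonneg _).trans (hB 0 0)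
  refine (((summable_norm_pow_sq hq3).mul_right A).mul_of_nonneg (hβ.norm.mul_left B)
    (fun _ => by positivity) fun _ => by positivity).of_norm_bounded fun p => ?_
  rw [norm_mul, norm_mul, norm_mul, ← qPochInv_natCast]
  gcongr
  · exact hA _
  · exact hB _ _

theorem limiting_cubic_bailey_lemma (hq₀ : q ≠ 0) (hq : ‖q‖ < 1) {α : ℤ → ℂ}
    (hα : Summable fun r => q ^ (r ^ 2) * α r) (hβ : Summable fun k : ℕ => baileySum q α k k) :
    ∑' p : ℕ × ℕ, (q ^ 3) ^ (p.1 ^ 2) * (qPoch (q ^ 3) (q ^ 3) (2 * p.1))⁻¹ *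
        (cubicWeight q p.1 p.2 * baileySum q α p.2 p.2) =
      (∑' r : ℤ, (q ^ 3) ^ (r ^ 2) * (q ^ (r ^ 2) * α r)) * (qPochInf (q ^ 3) (q ^ 3))⁻¹ := by
  rw [← limiting_bailey_lemma (pow_ne_zero 3 hq₀) (norm_pow_lt_one hq three_ne_zero) hα,
    (summable_cubicWeight_mul hq hβ).tsum_prod]
  refine tsum_congr fun n => ?_
  dsimp only
  rw [cubic_bailey_lemma hq₀ (not_isOfFinOrder_of_norm_lt_one hq), tsum_mul_left, mul_assoc,
    tsum_eq_sum (s := range (n + 1)) fun k hk => ?_]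
  rw [cubicWeight_of_lt q (by simpa using hk), zero_mul]

theorem baileySum_neg_self_eq (hq₀ : q ≠ 0) (hq : ‖q‖ < 1) (n : ℕ) :
    baileySum q (fun r => (-q) ^ r * q ^ (r ^ 2)) n n = q ^ n * qPochInv (q ^ 2) n := by
  have hq' := not_isOfFinOrder_of_norm_lt_one hq
  rw [baileySum_neg_self hq₀ hq', baileySum_neg_one_eq hq₀ hq', zpow_natCast]

theorem summable_baileySum_neg_self (hq₀ : q ≠ 0) (hq : ‖q‖ < 1) :
    Summable fun n : ℕ => baileySum q (fun r => (-q) ^ r * q ^ (r ^ 2)) n n := by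
  obtain ⟨C, hC⟩ := exists_norm_qPochInv_le (norm_pow_lt_one hq two_ne_zero)
  refine ((summable_geometric_of_lt_one (norm_nonneg q) hq).mul_right C).of_norm_bounded
    fun n => ?_
  rw [baileySum_neg_self_eq hq₀ hq, norm_mul, norm_pow]
  gcongr
  exact hC _

theorem tsum_subtype_eq_tsum_cubicWeight (hq₀ : q ≠ 0) (hq : ‖q‖ < 1) :
    (∑' p : {p : ℕ × ℕ // p.2 ≤ p.1},
      q ^ (3 * p.1.1 ^ 2 + p.1.2 ^ 2 + p.1.2) * qPoch q q (3 * p.1.1 - p.1.2) /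
        (qPoch (q ^ 3) (q ^ 3) (2 * p.1.1) * qPoch (q ^ 3) (q ^ 3) (p.1.1 - p.1.2) *
          qPoch (q ^ 2) (q ^ 2) p.1.2)) =
      ∑' p : ℕ × ℕ, (q ^ 3) ^ (p.1 ^ 2) * (qPoch (q ^ 3) (q ^ 3) (2 * p.1))⁻¹ *
        (cubicWeight q p.1 p.2 * baileySum q (fun r => (-q) ^ r * q ^ (r ^ 2)) p.2 p.2) := by
  rw [← tsum_subtype_eq_of_support_subset (s := {p : ℕ × ℕ | p.2 ≤ p.1})]
  · refine tsum_congr fun ⟨⟨n, k⟩, (hk : k ≤ n)⟩ => ?_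
    rw [baileySum_neg_self_eq hq₀ hq, cubicWeight, ← Nat.cast_sub hk, qPochInv_natCast,
      qPochInv_natCast, ← pow_mul]
    ring
  · intro p hp
    contrapose! hp
    simp [cubicWeight_of_lt q (not_le.mp hp)]

theorem tsum_theta_pow_five (hq₀ : q ≠ 0) (hq : ‖q‖ < 1) :
    ∑' r : ℤ, (-q) ^ r * (q ^ 5) ^ (r ^ 2) =
      qPochInf (q ^ 10) (q ^ 10) * qPochInf (q ^ 6) (q ^ 10) * qPochInf (q ^ 4) (q ^ 10) := by
  rw [jacobi_triple_product (pow_ne_zero 5 hq₀) (norm_pow_lt_one hq (by norm_num))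
    (neg_ne_zero.mpr hq₀), ← pow_mul, show -(-q * q ^ 5) = q ^ 6 by ring,
    show -((-q)⁻¹ * q ^ 5) = q ^ 4 by field_simp]

end Limits

/-- Identity (7.1): the sum runs over pairs of integers `s_1 ≥ s_2 ≥ 0`. -/
theorem identity_7_1 (q : ℂ) (h0 : 0 < ‖q‖) (h1 : ‖q‖ < 1) :
    (∑' p : {p : ℕ × ℕ // p.2 ≤ p.1},
      q ^ (3 * p.1.1 ^ 2 + p.1.2 ^ 2 + p.1.2) * qPoch q q (3 * p.1.1 - p.1.2) /
        (qPoch (q ^ 3) (q ^ 3) (2 * p.1.1) * qPoch (q ^ 3) (q ^ 3) (p.1.1 - p.1.2) *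
          qPoch (q ^ 2) (q ^ 2) p.1.2)) =
      qPochInf (q ^ 10) (q ^ 10) * qPochInf (q ^ 4) (q ^ 10) * qPochInf (q ^ 6) (q ^ 10) /
        qPochInf (q ^ 3) (q ^ 3) := by
  have hq₀ : q ≠ 0 := norm_pos_iff.mp h0
  have hα : Summable fun r : ℤ => q ^ (r ^ 2) * ((-q) ^ r * q ^ (r ^ 2)) := by
    refine (summable_theta (pow_ne_zero 2 hq₀) (norm_pow_lt_one h1 two_ne_zero)
      (neg_ne_zero.mpr hq₀)).congr fun r => ?_
    rw [pow_two q, mul_zpow]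
    ring
  have htheta (r : ℤ) : (q ^ 3) ^ (r ^ 2) * (q ^ (r ^ 2) * ((-q) ^ r * q ^ (r ^ 2))) =
      (-q) ^ r * (q ^ 5) ^ (r ^ 2) := by
    rw [show q ^ 5 = q ^ 3 * q * q by ring, mul_zpow, mul_zpow]
    ring
  rw [tsum_subtype_eq_tsum_cubicWeight hq₀ h1,
    limiting_cubic_bailey_lemma hq₀ h1 hα (summable_baileySum_neg_self hq₀ h1),
    tsum_congr htheta, tsum_theta_pow_five hq₀ h1]
  ring
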